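/- Fix 0 < a < 1 and let ω = (q_n)_{n≥1} with q_n = aⁿ. Then for every k ≥ 0, every connected component of [0,1] ∖ E_{k+1}(ω) has length at least 2 a^{k+1} ℓ_{k+1}; equivalently, for any two distinct strings s, t ∈ {0,1}^{k+1} the distance between I_{k+1}(s) and I_{k+1}(t) is at least 2 a^{k+1} ℓ_{k+1}. -/

import Mathlib

open Set Filter

/-- `ℓ_k = 2^{-k} ∏_{j=1}^k (1 - q_j)` (here `q` is 0-indexed: `q 0` is `q_1`). -/
noncomputable def cantorLen (q : ℕ → ℝ) (k : ℕ) : ℝ :=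
  (∏ j ∈ Finset.range k, (1 - q j)) / 2 ^ k

/-- Left endpoint `a_k(s) = ∑_{j=1}^k s_j (ℓ_{j-1} - ℓ_j)` of the interval `I_k(s)`. -/
noncomputable def cantorPt (q : ℕ → ℝ) {k : ℕ} (s : Fin k → Bool) : ℝ :=
  ∑ j : Fin k, if s j then cantorLen q j - cantorLen q (j + 1) else 0

/-- The level-`k` closed interval `I_k(s) = [a_k(s), a_k(s) + ℓ_k]`. -/
noncomputable def cantorInterval (q : ℕ → ℝ) {k : ℕ} (s : Fin k → Bool) : Set ℝ :=
  Icc (cantorPt q s) (cantorPt q s + cantorLen q k)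

/-- The level-`k` set `E_k(ω) = ⋃_{s ∈ {0,1}^k} I_k(s)`. -/
noncomputable def cantorLevel (q : ℕ → ℝ) (k : ℕ) : Set ℝ :=
  ⋃ s : Fin k → Bool, cantorInterval q s

/-- The random Cantor set `E(ω) = ⋂_k E_k(ω)`. -/
noncomputable def randomCantorSet (q : ℕ → ℝ) : Set ℝ :=
  ⋂ k : ℕ, cantorLevel q k

/-!
If two distinct strings first differ in the digit that splits level `j` (0-indexed), their
intervals lie in different children of a common interval of level `j`. These children leave a
middle gap of length `ℓ_j - 2 ℓ_{j+1} = q_j ℓ_j`, and nesting keeps the descendants at least that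
far apart. Since `ℓ_j ≥ 2 ℓ_{j+1} ≥ 2 ℓ_k` for `j < k`, a lower bound `δ` for `q` below level `k`
gives the distance `2 δ ℓ_k`.
-/

section CantorLen

variable {q : ℕ → ℝ}

theorem two_mul_cantorLen_succ (q : ℕ → ℝ) (k : ℕ) :
    2 * cantorLen q (k + 1) = (1 - q k) * cantorLen q k := by
  simp only [cantorLen, Finset.prod_range_succ, pow_succ]
  field_simp

theorem cantorLen_nonneg (hq : ∀ n, q n ≤ 1) (k : ℕ) : 0 ≤ cantorLen q k :=
  div_nonneg (Finset.prod_nonneg fun j _ => sub_nonneg.2 (hq j)) (by positivity)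

theorem two_mul_cantorLen_succ_le (hq : ∀ n, q n ∈ Icc 0 1) (k : ℕ) :
    2 * cantorLen q (k + 1) ≤ cantorLen q k := by
  rw [two_mul_cantorLen_succ]
  exact mul_le_of_le_one_left (cantorLen_nonneg (fun n => (hq n).2) k)
    (sub_le_self 1 (hq k).1)

theorem cantorLen_antitone (hq : ∀ n, q n ∈ Icc 0 1) : Antitone (cantorLen q) :=
  antitone_nat_of_succ_le fun k => by
    linarith [two_mul_cantorLen_succ_le hq k, cantorLen_nonneg (fun n => (hq n).2) (k + 1)]

theorem two_mul_cantorLen_le_of_lt (hq : ∀ n, q n ∈ Icc 0 1) {j k : ℕ} (hjk : j < k) :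
    2 * cantorLen q k ≤ cantorLen q j :=
  calc
    2 * cantorLen q k ≤ 2 * cantorLen q (j + 1) := by
      gcongr
      exact cantorLen_antitone hq hjk
    _ ≤ cantorLen q j := two_mul_cantorLen_succ_le hq j

end CantorLen

section CantorInterval

variable {q : ℕ → ℝ} {k : ℕ} {x y : ℝ}

theorem cantorPt_succ (q : ℕ → ℝ) (s : Fin (k + 1) → Bool) :
    cantorPt q s = cantorPt q (Fin.init s) +
      if s (Fin.last k) then cantorLen q k - cantorLen q (k + 1) else 0 :=
  Fin.sum_univ_castSucc _

theorem cantorInterval_subset_init (hq : ∀ n, q n ∈ Icc 0 1) (s : Fin (k + 1) → Bool) :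
    cantorInterval q s ⊆ cantorInterval q (Fin.init s) := by
  have hlen : cantorLen q (k + 1) ≤ cantorLen q k := cantorLen_antitone hq k.le_succ
  apply Icc_subset_Icc <;> rw [cantorPt_succ] <;> split_ifs <;> linarith

theorem gap_le_sub_of_init_eq {s t : Fin (k + 1) → Bool} (hinit : Fin.init s = Fin.init t)
    (hs : s (Fin.last k) = false) (ht : t (Fin.last k) = true)
    (hx : x ∈ cantorInterval q s) (hy : y ∈ cantorInterval q t) :
    q k * cantorLen q k ≤ y - x := by
  have hx_right : x ≤ cantorPt q (Fin.init t) + cantorLen q (k + 1) := by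
    simpa [cantorPt_succ, hs, hinit] using hx.2
  have hy_left : cantorPt q (Fin.init t) + (cantorLen q k - cantorLen q (k + 1)) ≤ y := by
    simpa [cantorPt_succ, ht] using hy.1
  linarith [two_mul_cantorLen_succ q k]

theorem gap_le_abs_sub_of_init_eq {s t : Fin (k + 1) → Bool} (hinit : Fin.init s = Fin.init t)
    (hst : s ≠ t) (hx : x ∈ cantorInterval q s) (hy : y ∈ cantorInterval q t) :
    q k * cantorLen q k ≤ |x - y| := by
  have hlast : s (Fin.last k) ≠ t (Fin.last k) := fun h =>
    hst <| by rw [← Fin.snoc_init_self s, ← Fin.snoc_init_self t, hinit, h]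
  cases hs : s (Fin.last k) <;> cases ht : t (Fin.last k)
  case false.true =>
    rw [abs_sub_comm]
    exact (gap_le_sub_of_init_eq hinit hs ht hx hy).trans (le_abs_self _)
  case true.false => exact (gap_le_sub_of_init_eq hinit.symm ht hs hy hx).trans (le_abs_self _)
  all_goals exact absurd (hs.trans ht.symm) hlast

theorem exists_gap_le_abs_sub (hq : ∀ n, q n ∈ Icc 0 1) {s t : Fin k → Bool} (hst : s ≠ t)
    (hx : x ∈ cantorInterval q s) (hy : y ∈ cantorInterval q t) :
    ∃ j < k, q j * cantorLen q j ≤ |x - y| := by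
  induction k with
  | zero => exact absurd (Subsingleton.elim s t) hst
  | succ k ih =>
    by_cases hinit : Fin.init s = Fin.init t
    · exact ⟨k, k.lt_succ_self, gap_le_abs_sub_of_init_eq hinit hst hx hy⟩
    · obtain ⟨j, hj, hgap⟩ := ih hinit
        (cantorInterval_subset_init hq s hx) (cantorInterval_subset_init hq t hy)
      exact ⟨j, hj.trans k.lt_succ_self, hgap⟩

end CantorInterval

theorem cantorIntervals_gap_geometric_general {q : ℕ → ℝ} (hq : ∀ n, q n ∈ Icc 0 1)
    {k : ℕ} {δ : ℝ} (hδ : ∀ j < k, δ ≤ q j) {s t : Fin k → Bool} (hst : s ≠ t) :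
    ∀ x ∈ cantorInterval q s, ∀ y ∈ cantorInterval q t,
      2 * δ * cantorLen q k ≤ |x - y| := by
  intro x hx y hy
  obtain ⟨j, hj, hgap⟩ := exists_gap_le_abs_sub hq hst hx hy
  have hlen : 0 ≤ cantorLen q k := cantorLen_nonneg (fun n => (hq n).2) k
  calc
    2 * δ * cantorLen q k = δ * (2 * cantorLen q k) := by ring
    _ ≤ q j * (2 * cantorLen q k) := by
      gcongr
      exact hδ j hj
    _ ≤ q j * cantorLen q j :=
      mul_le_mul_of_nonneg_left (two_mul_cantorLen_le_of_lt hq hj) (hq j).1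
    _ ≤ |x - y| := hgap

/-- Fix 0 < a < 1 and let ω = (q_n) with q_n = aⁿ. For every k ≥ 0 and any
two distinct strings s, t ∈ {0,1}^{k+1}, the distance between I_{k+1}(s) and I_{k+1}(t)
is at least 2 a^{k+1} ℓ_{k+1}. -/
theorem cantorIntervals_gap_geometric
    (a : ℝ) (ha0 : 0 < a) (ha1 : a < 1) (k : ℕ)
    (s t : Fin (k + 1) → Bool) (hst : s ≠ t) :
    ∀ x ∈ cantorInterval (fun n => a ^ (n + 1)) s,
      ∀ y ∈ cantorInterval (fun n => a ^ (n + 1)) t,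
        2 * a ^ (k + 1) * cantorLen (fun n => a ^ (n + 1)) (k + 1) ≤ |x - y| :=
  cantorIntervals_gap_geometric_general (fun _ => ⟨by positivity, pow_le_one₀ ha0.le ha1.le⟩)
    (fun _ hj => pow_le_pow_of_le_one ha0.le ha1.le (Nat.succ_le_of_lt hj)) hst
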